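/- arXiv:2202.13141 — 2 statements merged into one kernel-verified Lean document; each statement's English description precedes it below -/
import Mathlib

section
/- Let H = (V,E) be a proper Eulerian hypergraph and let k ≥ 1. Then H has a k-qubit Pauli-based magic assignment if and only if the valid Gram space of H contains a magic Gram matrix whose rank as a matrix over the field ZMod 2 is at most 2k. -/
open Matrix Finset

/-! ### Pauli matrices and observables -/

/-- The Pauli `X` matrix. -/
noncomputable def PX : Matrix (Fin 2) (Fin 2) ℂ := !![0, 1; 1, 0]

/-- The Pauli `Y` matrix. -/
noncomputable def PY : Matrix (Fin 2) (Fin 2) ℂ := !![0, -Complex.I; Complex.I, 0]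

/-- The Pauli `Z` matrix. -/
noncomputable def PZ : Matrix (Fin 2) (Fin 2) ℂ := !![1, 0; 0, -1]

/-- The Kronecker (tensor) product of `k` 2×2 matrices, realized as a matrix indexed by
`Fin k → Fin 2` (a type of cardinality `2^k`). -/
noncomputable def pauliTensor (k : ℕ) (P : Fin k → Matrix (Fin 2) (Fin 2) ℂ) :
    Matrix (Fin k → Fin 2) (Fin k → Fin 2) ℂ :=
  Matrix.of fun f g => ∏ i, P i (f i) (g i)

/-- A `k`-qubit Pauli observable: `ε · (P₁ ⊗ ⋯ ⊗ P_k)` with `ε ∈ {1,-1}` and each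
`P_i ∈ {I, X, Y, Z}`. -/
def IsPauliObservable {k : ℕ} (A : Matrix (Fin k → Fin 2) (Fin k → Fin 2) ℂ) : Prop :=
  ∃ (ε : ℂ) (P : Fin k → Matrix (Fin 2) (Fin 2) ℂ),
    (ε = 1 ∨ ε = -1) ∧ (∀ i, P i = 1 ∨ P i = PX ∨ P i = PY ∨ P i = PZ) ∧
    A = ε • pauliTensor k P

/-! ### Hypergraphs -/

/-- Product of the observables assigned to the vertices of a hyperedge (taken in increasing
order of the vertices; for commuting observables this is the product in any order). -/
noncomputable def edgeProd {V n : Type*} [LinearOrder V] [Fintype n] [DecidableEq n]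
    (α : V → Matrix n n ℂ) (e : Finset V) : Matrix n n ℂ :=
  ((e.sort (· ≤ ·)).map α).prod

/-- A proper Eulerian hypergraph: each vertex lies in an even number of hyperedges, there are
no isolated vertices, no empty hyperedges, and all hyperedges are distinct. -/
def ProperEulerian {V E : Type*} [DecidableEq V] [Fintype E] (edge : E → Finset V) : Prop :=
  (∀ v : V, Even (Finset.univ.filter (fun e : E => v ∈ edge e)).card) ∧
  (∀ v : V, ∃ e : E, v ∈ edge e) ∧
  (∀ e : E, (edge e).Nonempty) ∧
  Function.Injective edge

/-- A valid Gram matrix for a hypergraph. -/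
def IsValidGram {V E : Type*} (edge : E → Finset V) (M : Matrix V V (ZMod 2)) : Prop :=
  M.IsSymm ∧ (∀ v, M v v = 0) ∧
  (∀ e : E, ∀ u ∈ edge e, ∀ v ∈ edge e, M u v = 0) ∧
  (∀ e : E, ∀ v : V, ∑ u ∈ edge e, M u v = 0)

/-- The concatenated list of vertices of the hyperedges, each hyperedge's vertices listed in
increasing order, hyperedges enumerated by the list `le`. -/
def vertexList {V E : Type*} [LinearOrder V] (edge : E → Finset V) (le : List E) : List V :=
  (le.map fun e => (edge e).sort (· ≤ ·)).flatten

/-- The inversion sum `s(M) = ∑_{i<j, L_i > L_j} M_{L_i, L_j}`. -/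
def inversionSum {V : Type*} [LinearOrder V] (M : Matrix V V (ZMod 2)) (L : List V) : ZMod 2 :=
  ∑ i : Fin L.length, ∑ j : Fin L.length,
    if i < j ∧ L.get j < L.get i then M (L.get i) (L.get j) else 0

/-- A magic Gram matrix: a valid Gram matrix with inversion sum 1. -/
def MagicGram {V E : Type*} [LinearOrder V] (edge : E → Finset V) (le : List E)
    (M : Matrix V V (ZMod 2)) : Prop :=
  IsValidGram edge M ∧ inversionSum M (vertexList edge le) = 1

/-- A `k`-qubit Pauli-based magic assignment of a hypergraph. -/
def IsPauliMagicAssignment {V E : Type*} [LinearOrder V] [Fintype E] (k : ℕ)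
    (edge : E → Finset V) (α : V → Matrix (Fin k → Fin 2) (Fin k → Fin 2) ℂ) : Prop :=
  (∀ v, IsPauliObservable (α v)) ∧
  (∀ e : E, ∀ u ∈ edge e, ∀ w ∈ edge e, Commute (α u) (α w)) ∧
  (∀ e : E, edgeProd α (edge e) = 1 ∨ edgeProd α (edge e) = -1) ∧
  Odd (Nat.card {e : E // edgeProd α (edge e) = -1})

/-- A magic assignment of a hypergraph by Hermitian matrices squaring to the identity. -/
def IsMagicAssignment {V E n : Type*} [LinearOrder V] [Fintype E] [Fintype n] [DecidableEq n]
    (edge : E → Finset V) (α : V → Matrix n n ℂ) : Prop :=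
  (∀ v, (α v).IsHermitian) ∧ (∀ v, α v * α v = 1) ∧
  (∀ e : E, ∀ u ∈ edge e, ∀ w ∈ edge e, Commute (α u) (α w)) ∧
  (∀ e : E, edgeProd α (edge e) = 1 ∨ edgeProd α (edge e) = -1) ∧
  Odd (Nat.card {e : E // edgeProd α (edge e) = -1})

open scoped Classical in
/-- The sign vector `c(α) ∈ (ZMod 2)^E` of an assignment: `0` on hyperedges with product `+I`,
`1` on the others. -/
noncomputable def cvec {V E n : Type*} [LinearOrder V] [Fintype E] [Fintype n] [DecidableEq n]
    (edge : E → Finset V) (α : V → Matrix n n ℂ) : E → ZMod 2 :=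
  fun e => if edgeProd α (edge e) = 1 then 0 else 1

/-- The incidence matrix of a hypergraph. -/
def incMatrix {V E : Type*} [DecidableEq V] (edge : E → Finset V) : Matrix V E (ZMod 2) :=
  Matrix.of fun v e => if v ∈ edge e then 1 else 0

/-- Hamming weight of a vector over `ZMod 2`. -/
def hWeight {E : Type*} [Fintype E] (y : E → ZMod 2) : ℕ :=
  (Finset.univ.filter fun e => y e ≠ 0).card

/-- The symplectic product on `(ZMod 2)^{2k}` (coordinates indexed by `Fin k ⊕ Fin k`). -/
def sympl (k : ℕ) (s t : Fin k ⊕ Fin k → ZMod 2) : ZMod 2 :=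
  ∑ i : Fin k, (s (Sum.inl i) * t (Sum.inr i) + s (Sum.inr i) * t (Sum.inl i))

/-! ### Helpers -/

/-- sign character -/
noncomputable def sgn2 (a : ZMod 2) : ℂ := if a = 0 then 1 else -1

lemma sgn2_zero : sgn2 0 = 1 := by simp [sgn2]

lemma sgn2_one : sgn2 1 = -1 := by simp [sgn2]

lemma zmod2_cases (a : ZMod 2) : a = 0 ∨ a = 1 := by
  revert a; decide

lemma sgn2_add (a b : ZMod 2) : sgn2 (a + b) = sgn2 a * sgn2 b := by
  have h : (1 : ZMod 2) + 1 = 0 := by decide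
  rcases zmod2_cases a with rfl | rfl <;> rcases zmod2_cases b with rfl | rfl <;>
    simp [sgn2, h]

lemma sgn2_sum {ι : Type*} (s : Finset ι) (f : ι → ZMod 2) :
    sgn2 (∑ i ∈ s, f i) = ∏ i ∈ s, sgn2 (f i) := by
  classical
  induction s using Finset.induction_on with
  | empty => simp [sgn2_zero]
  | insert a s ha ih => rw [Finset.sum_insert ha, Finset.prod_insert ha, sgn2_add, ih]

section lists
variable {V n : Type*} [LinearOrder V] [Fintype n] [DecidableEq n]

lemma inversionSum_cons (M : Matrix V V (ZMod 2)) (a : V) (L : List V) :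
    inversionSum M (a :: L) =
      (L.map (fun b => if b < a then M a b else 0)).sum + inversionSum M L := by
  unfold inversionSum
  have h : (L.map (fun b => if b < a then M a b else 0)).sum
      = ∑ j : Fin L.length, (if L.get j < a then M a (L.get j) else 0) := by
    rw [← List.sum_ofFn]
    congr 1
    apply List.ext_get <;> simp
  rw [h]
  simp only [List.length_cons]
  rw [Fin.sum_univ_succ]
  congr 1
  · rw [Fin.sum_univ_succ]
    simp
  · apply Finset.sum_congr rfl
    intro i _
    rw [Fin.sum_univ_succ]
    simp

lemma orderedInsert_prod (α : V → Matrix n n ℂ) (M : Matrix V V (ZMod 2))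
    (hc : ∀ u v, α u * α v = sgn2 (M u v) • (α v * α u)) (a : V) (l : List V)
    (hl : l.Pairwise (· ≤ ·)) :
    α a * (l.map α).prod = sgn2 ((l.map (fun b => if b < a then M a b else 0)).sum) •
      ((l.orderedInsert (· ≤ ·) a).map α).prod := by
  induction l with
  | nil => simp [sgn2_zero]
  | cons b l ih =>
    rw [List.pairwise_cons] at hl
    by_cases hab : a ≤ b
    · have h0 : ((b :: l).map (fun b => if b < a then M a b else 0)).sum = 0 := by
        apply List.sum_eq_zero
        intro x hx
        rw [List.mem_map] at hx
        obtain ⟨c, hc, rfl⟩ := hx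
        have : a ≤ c := by
          rcases List.mem_cons.1 hc with rfl | h
          · exact hab
          · exact hab.trans (hl.1 c h)
        simp [not_lt.2 this]
      rw [h0, sgn2_zero, one_smul]
      simp [hab]
    · have hba : b < a := not_le.1 hab
      simp only [List.map_cons, List.prod_cons, List.sum_cons, List.orderedInsert_cons, hab,
        if_false, hba, if_true]
      rw [← mul_assoc, hc a b, sgn2_add, smul_mul_assoc, mul_assoc, ih hl.2, mul_smul_comm,
        smul_smul]

lemma insertionSort_prod (α : V → Matrix n n ℂ) (M : Matrix V V (ZMod 2))
    (hc : ∀ u v, α u * α v = sgn2 (M u v) • (α v * α u)) (L : List V) :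
    (L.map α).prod = sgn2 (inversionSum M L) •
      ((L.insertionSort (· ≤ ·)).map α).prod := by
  induction L with
  | nil => simp [inversionSum, sgn2_zero]
  | cons a L ih =>
    rw [inversionSum_cons, List.map_cons, List.prod_cons, ih, mul_smul_comm,
      orderedInsert_prod α M hc a _ (List.pairwise_insertionSort _ L), smul_smul,
      List.insertionSort_cons, sgn2_add, mul_comm]
    congr 3
    exact ((List.perm_insertionSort (· ≤ ·) L).map _).sum_eq

lemma sorted_even_prod (α : V → Matrix n n ℂ) (h2 : ∀ v, α v * α v = 1) :
    ∀ (m : ℕ) (l : List V), l.length ≤ m → l.Pairwise (· ≤ ·) →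
      (∀ v, Even (l.count v)) → (l.map α).prod = 1 := by
  intro m
  induction m with
  | zero =>
    intro l hl _ _
    have : l = [] := List.length_eq_zero_iff.1 (by omega)
    simp [this]
  | succ m ih =>
    intro l hl hs he
    match l, hl, hs, he with
    | [], _, _, _ => simp
    | [a], _, _, he =>
      exfalso
      have := he a
      simp at this
    | a :: b :: l, hl, hs, he =>
      have hab : b = a := by
        by_contra hne
        have h1 : a ∉ b :: l := by
          intro hm
          rcases List.mem_cons.1 hm with h | h
          · exact hne h.symm
          · have h3 : b ≤ a := (List.pairwise_cons.1 (List.pairwise_cons.1 hs).2).1 a h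
            have h4 : a ≤ b := (List.pairwise_cons.1 hs).1 b (by simp)
            exact hne (le_antisymm h3 h4)
        have := he a
        rw [List.count_cons_self, List.count_eq_zero_of_not_mem h1] at this
        simp at this
      subst hab
      simp only [List.map_cons, List.prod_cons]
      rw [← mul_assoc, h2, one_mul]
      apply ih
      · simp at hl; omega
      · exact (List.pairwise_cons.1 (List.pairwise_cons.1 hs).2).2
      · intro v
        have := he v
        by_cases hv : b = v
        · subst hv
          rw [List.count_cons_self, List.count_cons_self] at this
          revert this
          simp [Nat.even_add_one]
        · rwa [List.count_cons_of_ne hv, List.count_cons_of_ne hv] at this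

lemma list_prod_mul_comm (α : V → Matrix n n ℂ) (M : Matrix V V (ZMod 2))
    (hc : ∀ u v, α u * α v = sgn2 (M u v) • (α v * α u)) (v : V) (l : List V) :
    (l.map α).prod * α v = sgn2 ((l.map (fun u => M u v)).sum) • (α v * (l.map α).prod) := by
  induction l with
  | nil => simp [sgn2_zero]
  | cons a l ih =>
    simp only [List.map_cons, List.prod_cons, List.sum_cons]
    rw [mul_assoc, ih, mul_smul_comm, ← mul_assoc, hc a v, smul_mul_assoc, smul_smul, mul_assoc,
      sgn2_add, mul_comm]

lemma list_prod_sq (α : V → Matrix n n ℂ) (h2 : ∀ v, α v * α v = 1) (l : List V)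
    (hc : ∀ u ∈ l, ∀ v ∈ l, Commute (α u) (α v)) :
    (l.map α).prod * (l.map α).prod = 1 := by
  induction l with
  | nil => simp
  | cons a l ih =>
    have ih' := ih (fun u hu v hv => hc u (by simp [hu]) v (by simp [hv]))
    have hcm : Commute (α a) (l.map α).prod := by
      apply Commute.list_prod_right
      intro x hx
      obtain ⟨c, hcl, rfl⟩ := List.mem_map.1 hx
      exact hc a (by simp) c (by simp [hcl])
    simp only [List.map_cons, List.prod_cons]
    calc α a * (l.map α).prod * (α a * (l.map α).prod)
        = α a * ((l.map α).prod * α a) * (l.map α).prod := by simp only [mul_assoc]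
      _ = (α a * α a) * ((l.map α).prod * (l.map α).prod) := by
          rw [← hcm.eq]; simp only [mul_assoc]
      _ = 1 := by rw [h2, ih', one_mul]

lemma sort_sum {A : Type*} [AddCommMonoid A] (e : Finset V) (f : V → A) :
    ((e.sort (· ≤ ·)).map f).sum = ∑ u ∈ e, f u := by
  rw [← List.sum_toFinset f (Finset.sort_nodup _ _), Finset.sort_toFinset]

lemma one_ne_neg_one_mat [Nonempty n] : (1 : Matrix n n ℂ) ≠ -1 := by
  intro h
  have i : n := Classical.arbitrary n
  have := congrFun (congrFun h i) i
  simp at this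
  norm_num [eq_neg_iff_add_eq_zero] at this

open scoped Classical in
lemma pm_prod {E : Type*} (f : E → Matrix n n ℂ) (l : List E)
    (hf : ∀ e, f e = 1 ∨ f e = -1) :
    (l.map f).prod = (-1) ^ (l.countP (fun e => f e = -1)) := by
  induction l with
  | nil => simp
  | cons a l ih =>
    rw [List.map_cons, List.prod_cons, ih, List.countP_cons]
    by_cases h : f a = -1
    · simp [h, pow_succ]
    · have := (hf a).resolve_right h
      have hd : decide (f a = -1) = false := by simp [h]
      rw [hd, this, one_mul]
      simp

lemma key {E : Type*} [Fintype E] [Nonempty n] (edge : E → Finset V)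
    (hH : ProperEulerian edge)
    (le : List E) (hnd : le.Nodup) (hmem : ∀ e : E, e ∈ le)
    (α : V → Matrix n n ℂ) (M : Matrix V V (ZMod 2)) (h2 : ∀ v, α v * α v = 1)
    (hc : ∀ u v, α u * α v = sgn2 (M u v) • (α v * α u))
    (hpm : ∀ e : E, edgeProd α (edge e) = 1 ∨ edgeProd α (edge e) = -1) :
    Odd (Nat.card {e : E // edgeProd α (edge e) = -1}) ↔
      inversionSum M (vertexList edge le) = 1 := by
  classical
  have h1 : ((vertexList edge le).map α).prod = sgn2 (inversionSum M (vertexList edge le)) • 1 := by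
    rw [insertionSort_prod α M hc]
    congr 1
    apply sorted_even_prod α h2 _ _ le_rfl (List.pairwise_insertionSort _ _)
    intro v
    rw [(List.perm_insertionSort _ _).count_eq, vertexList, List.count_flatten]
    have := hH.1 v
    convert this using 1
    rw [List.map_map, Finset.card_filter]
    have hu : (Finset.univ : Finset E) = le.toFinset := by ext e; simp [hmem]
    rw [hu, List.sum_toFinset _ hnd]
    congr 1
    apply List.map_congr_left
    intro e _
    simp only [Function.comp]
    rw [List.Nodup.count (Finset.sort_nodup _ _)]
    simp
  have h3 : ((vertexList edge le).map α).prod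
      = (-1) ^ (Nat.card {e : E // edgeProd α (edge e) = -1}) := by
    rw [vertexList, List.map_flatten, List.prod_flatten, List.map_map, List.map_map]
    have := pm_prod (fun e => edgeProd α (edge e)) le hpm
    rw [show (le.map ((List.prod ∘ List.map α) ∘ fun e => (edge e).sort (· ≤ ·)))
      = le.map (fun e => edgeProd α (edge e)) from rfl, this]
    congr 1
    rw [Nat.card_eq_fintype_card, Fintype.card_subtype, Finset.card_filter]
    have hu : (Finset.univ : Finset E) = le.toFinset := by ext e; simp [hmem]
    rw [hu, List.sum_toFinset _ hnd]
    clear this hu hnd hmem h1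
    induction le with
    | nil => simp
    | cons a l ih =>
      rw [List.countP_cons, List.map_cons, List.sum_cons, ih, add_comm]
      simp
  rw [h1] at h3
  have hne := one_ne_neg_one_mat (n := n)
  rcases zmod2_cases (inversionSum M (vertexList edge le)) with h | h
  · rw [h, sgn2_zero, one_smul] at h3
    rw [h]
    constructor
    · intro ho
      rw [ho.neg_one_pow] at h3
      exact absurd h3 hne
    · intro h; simp at h
  · rw [h, sgn2_one] at h3
    rw [h]
    simp only [iff_true]
    by_contra ho
    rw [Nat.not_odd_iff_even] at ho
    rw [ho.neg_one_pow, neg_one_smul] at h3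
    exact hne h3.symm

end lists

/-! ### Pauli matrices -/

/-- Single qubit Pauli matrix with symplectic coordinates. -/
noncomputable def pm (a b : ZMod 2) : Matrix (Fin 2) (Fin 2) ℂ :=
  if a = 0 then (if b = 0 then 1 else PZ) else (if b = 0 then PX else PY)

lemma pm_00 : pm 0 0 = 1 := by simp [pm]

lemma pm_01 : pm 0 1 = PZ := by simp [pm]

lemma pm_10 : pm 1 0 = PX := by simp [pm]

lemma pm_11 : pm 1 1 = PY := by simp [pm]

lemma pm_sq (a b : ZMod 2) : pm a b * pm a b = 1 := by
  rcases zmod2_cases a with rfl | rfl <;> rcases zmod2_cases b with rfl | rfl <;>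
    ext i j <;> fin_cases i <;> fin_cases j <;>
    simp [pm_00, pm_01, pm_10, pm_11, PX, PY, PZ, Matrix.mul_apply, Fin.sum_univ_two]

lemma pm_comm (a b c d : ZMod 2) :
    pm a b * pm c d = sgn2 (a * d + b * c) • (pm c d * pm a b) := by
  have h : (1 : ZMod 2) + 1 = 0 := by decide
  rcases zmod2_cases a with rfl | rfl <;> rcases zmod2_cases b with rfl | rfl <;>
  rcases zmod2_cases c with rfl | rfl <;> rcases zmod2_cases d with rfl | rfl <;>
    ext i j <;> fin_cases i <;> fin_cases j <;>
    simp [pm_00, pm_01, pm_10, pm_11, PX, PY, PZ, Matrix.mul_apply, Fin.sum_univ_two,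
      sgn2_zero, sgn2_one, h]

lemma pm_mul (a b c d : ZMod 2) :
    ∃ z : ℂ, pm a b * pm c d = z • pm (a + c) (b + d) := by
  have h : (1 : ZMod 2) + 1 = 0 := by decide
  have hXY : PX * PY = Complex.I • PZ := by
    ext i j; fin_cases i <;> fin_cases j <;> simp [PX, PY, PZ]
  have hYX : PY * PX = (-Complex.I) • PZ := by
    ext i j; fin_cases i <;> fin_cases j <;> simp [PX, PY, PZ]
  have hYZ : PY * PZ = Complex.I • PX := by
    ext i j; fin_cases i <;> fin_cases j <;> simp [PX, PY, PZ]
  have hZY : PZ * PY = (-Complex.I) • PX := by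
    ext i j; fin_cases i <;> fin_cases j <;> simp [PX, PY, PZ]
  have hZX : PZ * PX = Complex.I • PY := by
    ext i j; fin_cases i <;> fin_cases j <;> simp [PX, PY, PZ]
  have hXZ : PX * PZ = (-Complex.I) • PY := by
    ext i j; fin_cases i <;> fin_cases j <;> simp [PX, PY, PZ]
  have h0 := pm_sq 0 1
  have h1 := pm_sq 1 0
  have h2 := pm_sq 1 1
  rw [pm_01] at h0
  rw [pm_10] at h1
  rw [pm_11] at h2
  rcases zmod2_cases a with rfl | rfl <;> rcases zmod2_cases b with rfl | rfl <;>
  rcases zmod2_cases c with rfl | rfl <;> rcases zmod2_cases d with rfl | rfl <;>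
    simp only [pm_00, pm_01, pm_10, pm_11, h, add_zero, zero_add, one_mul, mul_one,
      hXY, hYX, hYZ, hZY, hZX, hXZ, h0, h1, h2] <;>
    first
    | exact ⟨_, rfl⟩
    | exact ⟨1, (one_smul _ _).symm⟩

lemma pauliTensor_mul (k : ℕ) (P Q : Fin k → Matrix (Fin 2) (Fin 2) ℂ) :
    pauliTensor k P * pauliTensor k Q = pauliTensor k (fun i => P i * Q i) := by
  ext f g
  simp only [pauliTensor, Matrix.mul_apply, Matrix.of_apply]
  rw [Finset.prod_univ_sum, Fintype.piFinset_univ]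
  simp only [Finset.prod_mul_distrib]

lemma pauliTensor_smul (k : ℕ) (c : Fin k → ℂ) (P : Fin k → Matrix (Fin 2) (Fin 2) ℂ) :
    pauliTensor k (fun i => c i • P i) = (∏ i, c i) • pauliTensor k P := by
  ext f g
  simp [pauliTensor, Finset.prod_mul_distrib]

lemma pauliTensor_one (k : ℕ) : pauliTensor k (fun _ => 1) = 1 := by
  ext f g
  simp only [pauliTensor, Matrix.of_apply, Matrix.one_apply]
  by_cases h : f = g
  · simp [h]
  · obtain ⟨i, hi⟩ := Function.ne_iff.1 h
    rw [if_neg h]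
    exact Finset.prod_eq_zero (Finset.mem_univ i) (by simp [hi])

/-- `k`-qubit Pauli observable with symplectic coordinates. -/
noncomputable def pauliOf (k : ℕ) (s : Fin k ⊕ Fin k → ZMod 2) :
    Matrix (Fin k → Fin 2) (Fin k → Fin 2) ℂ :=
  pauliTensor k (fun i => pm (s (Sum.inl i)) (s (Sum.inr i)))

lemma pauliOf_sq (k : ℕ) (s : Fin k ⊕ Fin k → ZMod 2) : pauliOf k s * pauliOf k s = 1 := by
  rw [pauliOf, pauliTensor_mul]
  simp only [pm_sq, pauliTensor_one]

lemma pauliOf_comm (k : ℕ) (s t : Fin k ⊕ Fin k → ZMod 2) :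
    pauliOf k s * pauliOf k t = sgn2 (sympl k s t) • (pauliOf k t * pauliOf k s) := by
  simp only [pauliOf, pauliTensor_mul]
  rw [sympl, sgn2_sum, ← pauliTensor_smul]
  congr 1
  funext i
  exact pm_comm _ _ _ _

lemma pauliOf_zero (k : ℕ) : pauliOf k 0 = 1 := by
  simp [pauliOf, pm_00, pauliTensor_one]

lemma pauliOf_mul (k : ℕ) (s t : Fin k ⊕ Fin k → ZMod 2) :
    ∃ z : ℂ, pauliOf k s * pauliOf k t = z • pauliOf k (s + t) := by
  choose z hz using fun i : Fin k =>
    pm_mul (s (Sum.inl i)) (s (Sum.inr i)) (t (Sum.inl i)) (t (Sum.inr i))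
  refine ⟨∏ i, z i, ?_⟩
  simp only [pauliOf, pauliTensor_mul]
  rw [← pauliTensor_smul]
  congr 1
  funext i
  exact hz i

lemma pauliOf_list_prod {V : Type*} (k : ℕ) (S : V → Fin k ⊕ Fin k → ZMod 2) (l : List V) :
    ∃ z : ℂ, (l.map (fun v => pauliOf k (S v))).prod = z • pauliOf k ((l.map S).sum) := by
  induction l with
  | nil => exact ⟨1, by simp [pauliOf_zero]⟩
  | cons a l ih =>
    obtain ⟨z, hz⟩ := ih
    obtain ⟨w, hw⟩ := pauliOf_mul k (S a) ((l.map S).sum)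
    refine ⟨z * w, ?_⟩
    simp only [List.map_cons, List.prod_cons, List.sum_cons]
    rw [hz, mul_smul_comm, hw, smul_smul]

lemma isPauli_pauliOf (k : ℕ) (s : Fin k ⊕ Fin k → ZMod 2) : IsPauliObservable (pauliOf k s) := by
  refine ⟨1, fun i => pm (s (Sum.inl i)) (s (Sum.inr i)), Or.inl rfl, ?_, by simp [pauliOf]⟩
  intro i
  rcases zmod2_cases (s (Sum.inl i)) with h | h <;>
    rcases zmod2_cases (s (Sum.inr i)) with h' | h' <;> simp [h, h', pm]

lemma exists_pauliOf {k : ℕ} {A : Matrix (Fin k → Fin 2) (Fin k → Fin 2) ℂ}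
    (hA : IsPauliObservable A) :
    ∃ (ε : ℂ) (s : Fin k ⊕ Fin k → ZMod 2), (ε = 1 ∨ ε = -1) ∧ A = ε • pauliOf k s := by
  obtain ⟨ε, P, hε, hP, rfl⟩ := hA
  have : ∀ i, ∃ a b, P i = pm a b := by
    intro i
    rcases hP i with h | h | h | h
    · exact ⟨0, 0, by rw [h, pm_00]⟩
    · exact ⟨1, 0, by rw [h, pm_10]⟩
    · exact ⟨1, 1, by rw [h, pm_11]⟩
    · exact ⟨0, 1, by rw [h, pm_01]⟩
  choose a b hab using this
  refine ⟨ε, Sum.elim a b, hε, ?_⟩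
  congr 1
  rw [pauliOf]
  congr 1
  funext i
  simp [hab]

/-! ### Alternating forms -/

lemma sympl_rank {V : Type*} [Fintype V] (k : ℕ) (S : V → Fin k ⊕ Fin k → ZMod 2) :
    (Matrix.of fun u v => sympl k (S u) (S v) : Matrix V V (ZMod 2)).rank ≤ 2 * k := by
  have h : (Matrix.of fun u v => sympl k (S u) (S v) : Matrix V V (ZMod 2))
      = (Matrix.of S : Matrix V (Fin k ⊕ Fin k) (ZMod 2)) *
        (Matrix.of fun c v => S v c.swap : Matrix (Fin k ⊕ Fin k) V (ZMod 2)) := by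
    ext u v
    simp [sympl, Matrix.mul_apply, Finset.sum_add_distrib]
  rw [h]
  refine (Matrix.rank_mul_le_left _ _).trans ((Matrix.rank_le_card_width _).trans ?_)
  simp
  omega

lemma rank_reduce {V : Type*} [Fintype V] [DecidableEq V] (M : Matrix V V (ZMod 2))
    (hs : ∀ u v, M u v = M v u) (hd : ∀ v, M v v = 0) (u v : V) (huv : M u v = 1) :
    (Matrix.of fun x y => M x y + (M x u * M v y + M x v * M u y) : Matrix V V (ZMod 2)).rank + 2
      ≤ M.rank := by
  set M' : Matrix V V (ZMod 2) := Matrix.of fun x y => M x y + (M x u * M v y + M x v * M u y)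
    with hM'
  have hvu : M v u = 1 := by rw [hs, huv]
  have h11 : (1 : ZMod 2) + 1 = 0 := by decide
  let A1 : Submodule (ZMod 2) (V → ZMod 2) :=
    LinearMap.range M.mulVecLin ⊓ LinearMap.ker (LinearMap.proj (R := ZMod 2) (φ := fun _ : V => ZMod 2) u)
  let A2 : Submodule (ZMod 2) (V → ZMod 2) :=
    A1 ⊓ LinearMap.ker (LinearMap.proj (R := ZMod 2) (φ := fun _ : V => ZMod 2) v)
  have hcol : ∀ w, (fun x => M x w) ∈ LinearMap.range M.mulVecLin := by
    intro w
    refine ⟨Pi.single w 1, ?_⟩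
    ext x
    simp
  have h1 : A1 < LinearMap.range M.mulVecLin := by
    refine lt_of_le_of_ne inf_le_left ?_
    intro h
    have := hcol v
    rw [← h] at this
    have := this.2
    simp [huv] at this
  have h2 : A2 < A1 := by
    refine lt_of_le_of_ne inf_le_left ?_
    intro h
    have : (fun x => M x u) ∈ A1 := ⟨hcol u, by simp [hd]⟩
    rw [← h] at this
    have := this.2
    simp [hvu] at this
  have h3 : LinearMap.range M'.mulVecLin ≤ A2 := by
    rintro _ ⟨z, rfl⟩
    have hz : M' *ᵥ z = M *ᵥ z + ((M *ᵥ z) v • (fun x => M x u) + (M *ᵥ z) u • (fun x => M x v)) := by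
      ext x
      simp only [hM', Matrix.mulVec, dotProduct, Matrix.of_apply, Pi.add_apply, Pi.smul_apply,
        smul_eq_mul, Finset.sum_mul, ← Finset.sum_add_distrib]
      apply Finset.sum_congr rfl
      intro y _
      ring
    refine ⟨⟨?_, ?_⟩, ?_⟩
    · rw [Matrix.mulVecLin_apply, hz]
      exact Submodule.add_mem _ ⟨z, rfl⟩ (Submodule.add_mem _ (Submodule.smul_mem _ _ (hcol u))
        (Submodule.smul_mem _ _ (hcol v)))
    · change (M' *ᵥ z) u = 0
      rw [hz]
      simp [hd, huv, CharTwo.add_self_eq_zero]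
    · change (M' *ᵥ z) v = 0
      rw [hz]
      simp [hd, hvu, CharTwo.add_self_eq_zero]
  have e1 := Submodule.finrank_lt_finrank_of_lt h1
  have e2 := Submodule.finrank_lt_finrank_of_lt h2
  have e3 := Submodule.finrank_mono h3
  unfold Matrix.rank
  omega

lemma alt_decomp {V : Type*} [Fintype V] [DecidableEq V] (k : ℕ) :
    ∀ M : Matrix V V (ZMod 2), (∀ u v, M u v = M v u) → (∀ v, M v v = 0) → M.rank ≤ 2 * k →
    ∃ S : V → Fin k ⊕ Fin k → ZMod 2, (∀ u v, M u v = sympl k (S u) (S v)) ∧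
      ∀ e : Finset V, (∀ w, ∑ u ∈ e, M u w = 0) → ∀ c, ∑ u ∈ e, S u c = 0 := by
  induction k with
  | zero =>
    intro M hs hd hr
    refine ⟨fun _ _ => 0, ?_, by simp⟩
    have h0 : M.rank = 0 := by omega
    unfold Matrix.rank at h0
    rw [Submodule.finrank_eq_zero, LinearMap.range_eq_bot] at h0
    intro u v
    have := congrFun (LinearMap.congr_fun h0 (Pi.single v 1)) u
    simpa [sympl] using this
  | succ k ih =>
    intro M hs hd hr
    by_cases hM : ∃ u v, M u v ≠ 0
    · obtain ⟨u, v, huv⟩ := hM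
      replace huv := (zmod2_cases _).resolve_left huv
      have hrr := rank_reduce M hs hd u v huv
      obtain ⟨S, hS1, hS2⟩ := ih
        (Matrix.of fun x y => M x y + (M x u * M v y + M x v * M u y))
        (by
          intro x y
          simp only [Matrix.of_apply]
          rw [hs y x, hs y u, hs v x, hs y v, hs u x]
          ring)
        (by
          intro x
          simp only [Matrix.of_apply]
          rw [hd, hs v x, hs u x, mul_comm (M x v), CharTwo.add_self_eq_zero, add_zero])
        (by omega)
      refine ⟨fun x => Sum.elim (Fin.cons (M x u) (fun i => S x (Sum.inl i)))
        (Fin.cons (M x v) (fun i => S x (Sum.inr i))), ?_, ?_⟩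
      · intro x y
        have h1 := hS1 x y
        simp only [Matrix.of_apply] at h1
        rw [sympl, Fin.sum_univ_succ]
        simp only [Sum.elim_inl, Sum.elim_inr, Fin.cons_zero, Fin.cons_succ]
        rw [sympl] at h1
        rw [← h1, hs v y, hs u y]
        have h2 := CharTwo.add_self_eq_zero (M x u * M y v + M x v * M y u)
        linear_combination -h2
      · intro e he c
        have h3 := hS2 e (by
          intro w
          simp only [Matrix.of_apply, Finset.sum_add_distrib, ← Finset.sum_mul, he]
          simp)
        rcases c with c | c
        · refine Fin.cases ?_ (fun i => ?_) c
          · simpa using he u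
          · simpa using h3 (Sum.inl i)
        · refine Fin.cases ?_ (fun i => ?_) c
          · simpa using he v
          · simpa using h3 (Sum.inr i)
    · push Not at hM
      exact ⟨fun _ _ => 0, by intro u v; simp [hM, sympl], by simp⟩

/-- A proper Eulerian hypergraph has a `k`-qubit Pauli-based magic assignment
iff its valid Gram space contains a magic Gram matrix of rank at most `2k` over `ZMod 2`. -/
theorem stmt1 {V E : Type*} [Fintype V] [LinearOrder V] [Fintype E]
    (edge : E → Finset V) (hH : ProperEulerian edge)
    (le : List E) (hnd : le.Nodup) (hmem : ∀ e : E, e ∈ le)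
    (k : ℕ) (hk : 1 ≤ k) :
    (∃ α : V → Matrix (Fin k → Fin 2) (Fin k → Fin 2) ℂ,
        IsPauliMagicAssignment k edge α) ↔
      ∃ M : Matrix V V (ZMod 2), MagicGram edge le M ∧ M.rank ≤ 2 * k := by
  constructor
  · rintro ⟨α, hP, hcomm, hpm, hodd⟩
    choose ε S hε hα using fun v => exists_pauliOf (hP v)
    have h2 : ∀ v, α v * α v = 1 := by
      intro v
      rw [hα, smul_mul_smul_comm, pauliOf_sq]
      rcases hε v with h | h <;> simp [h]
    have hne : (1 : Matrix (Fin k → Fin 2) (Fin k → Fin 2) ℂ) ≠ -1 := one_ne_neg_one_mat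
    let M : Matrix V V (ZMod 2) := Matrix.of fun u v => sympl k (S u) (S v)
    have hc : ∀ u v, α u * α v = sgn2 (M u v) • (α v * α u) := by
      intro u v
      rw [hα u, hα v, smul_mul_smul_comm, smul_mul_smul_comm, pauliOf_comm, smul_smul, smul_smul]
      congr 1
      simp only [M, Matrix.of_apply]
      ring
    -- a sign relation with a commuting pair forces the exponent to vanish
    have hsg : ∀ (a : ZMod 2) (A : Matrix (Fin k → Fin 2) (Fin k → Fin 2) ℂ),
        A * A = 1 ∨ A * A = -1 → A = sgn2 a • A → a = 0 := by
      intro a A hA h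
      rcases zmod2_cases a with h0 | h1
      · exact h0
      · exfalso
        rw [h1, sgn2_one, neg_one_smul] at h
        have hA0 : A = 0 := by
          have h4 : (2 : ℂ) • A = 0 := by
            rw [two_smul]
            nth_rewrite 1 [h]
            simp
          exact (smul_eq_zero.1 h4).resolve_left two_ne_zero
        rw [hA0] at hA
        rcases hA with h | h <;> simp at h
    refine ⟨M, ⟨⟨?_, ?_, ?_, ?_⟩, ?_⟩, sympl_rank k S⟩
    · ext u v
      simp only [M, Matrix.transpose_apply, Matrix.of_apply, sympl]
      apply Finset.sum_congr rfl
      intro i _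
      ring
    · intro v
      simp only [M, Matrix.of_apply, sympl]
      apply Finset.sum_eq_zero
      intro i _
      rw [mul_comm, CharTwo.add_self_eq_zero]
    · intro e u hu v hv
      apply hsg _ (α u * α v)
      · left
        have := (hcomm e u hu v hv).eq
        calc α u * α v * (α u * α v) = α u * α v * (α v * α u) := by rw [this]
          _ = α u * (α v * α v) * α u := by simp only [mul_assoc]
          _ = 1 := by rw [h2, mul_one, h2]
      · have := hc u v
        rwa [← (hcomm e u hu v hv).eq] at this
    · intro e v
      have h5 := list_prod_mul_comm α M hc v ((edge e).sort (· ≤ ·))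
      rw [sort_sum] at h5
      change edgeProd α (edge e) * α v = _ • (α v * edgeProd α (edge e)) at h5
      apply hsg _ (α v) (Or.inl (h2 v))
      rcases hpm e with h | h
      · rw [h] at h5
        simpa using h5
      · rw [h] at h5
        simpa using h5
    · exact (key edge hH le hnd hmem α M h2 hc hpm).1 hodd
  · rintro ⟨M, ⟨⟨hs, hd, h1, hsum⟩, hmag⟩, hr⟩
    obtain ⟨S, hS1, hS2⟩ := alt_decomp k M (fun u v => hs.apply v u) hd hr
    have h2 : ∀ v, pauliOf k (S v) * pauliOf k (S v) = 1 := fun v => pauliOf_sq k _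
    have hc : ∀ u v, pauliOf k (S u) * pauliOf k (S v)
        = sgn2 (M u v) • (pauliOf k (S v) * pauliOf k (S u)) := by
      intro u v
      rw [hS1, pauliOf_comm]
    have hcomm : ∀ e : E, ∀ u ∈ edge e, ∀ w ∈ edge e,
        Commute (pauliOf k (S u)) (pauliOf k (S w)) := by
      intro e u hu w hw
      have := hc u w
      rwa [h1 e u hu w hw, sgn2_zero, one_smul] at this
    have hpm : ∀ e : E, edgeProd (fun v => pauliOf k (S v)) (edge e) = 1 ∨
        edgeProd (fun v => pauliOf k (S v)) (edge e) = -1 := by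
      intro e
      have hsq := list_prod_sq (fun v => pauliOf k (S v)) h2 ((edge e).sort (· ≤ ·))
        (fun u hu v hv => hcomm e u (by simpa using hu) v (by simpa using hv))
      obtain ⟨z, hz⟩ := pauliOf_list_prod k S ((edge e).sort (· ≤ ·))
      have h0 : ∑ u ∈ edge e, S u = 0 := by
        ext c
        rw [Finset.sum_apply]
        exact hS2 (edge e) (hsum e) c
      rw [sort_sum, h0, pauliOf_zero] at hz
      unfold edgeProd
      rw [hz] at hsq ⊢
      rw [smul_mul_smul_comm, mul_one] at hsq
      have hzz : z * z = 1 := by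
        have := congrFun (congrFun hsq 0) 0
        simpa using this
      rcases mul_self_eq_one_iff.1 hzz with h | h
      · left; simp [h]
      · right; simp [h]
    exact ⟨fun v => pauliOf k (S v), fun v => isPauli_pauliOf k _, hcomm, hpm,
      (key edge hH le hnd hmem _ M h2 hc hpm).2 hmag⟩
end

section
/- Let H = (V,E) be a proper Eulerian hypergraph whose valid Gram space contains at least one magic Gram matrix. Then the minimum k ≥ 1 such that H has a k-qubit Pauli-based magic assignment equals one half of the minimum rank over ZMod 2 taken over all magic Gram matrices in the valid Gram space of H. -/
open Matrix Finset

namespace PauliAux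

/-- The sign `(-1)^x`. -/
noncomputable def sgn (x : ZMod 2) : ℂ := if x = 0 then 1 else -1

lemma sgn_zero : sgn 0 = 1 := by simp [sgn]

lemma zmod2_cases (x : ZMod 2) : x = 0 ∨ x = 1 := by
  fin_cases x
  · left; rfl
  · right; rfl

lemma sgn_one : sgn 1 = -1 := by simp [sgn]

lemma zmod2_two : (1 : ZMod 2) + 1 = 0 := by decide

lemma zmod2_self (x : ZMod 2) : x + x = 0 := by
  rcases zmod2_cases x with h | h <;> simp [h, zmod2_two]

lemma sgn_add (x y : ZMod 2) : sgn (x + y) = sgn x * sgn y := by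
  rcases zmod2_cases x with h | h <;> rcases zmod2_cases y with h' | h' <;>
    simp [h, h', sgn_zero, sgn_one, zmod2_two]

lemma sgn_sum {ι : Type*} (s : Finset ι) (f : ι → ZMod 2) :
    sgn (∑ i ∈ s, f i) = ∏ i ∈ s, sgn (f i) := by
  classical
  induction s using Finset.induction_on with
  | empty => simp [sgn_zero]
  | insert a s ha ih => rw [Finset.sum_insert ha, Finset.prod_insert ha, sgn_add, ih]

lemma sgn_eq_one {x : ZMod 2} (h : sgn x = 1) : x = 0 := by
  rcases zmod2_cases x with h' | h'
  · exact h'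
  · rw [h', sgn_one] at h
    norm_num at h

/-! ### Inversion sums -/

lemma inversionSum_nil {V : Type*} [LinearOrder V] (M : Matrix V V (ZMod 2)) :
    inversionSum M [] = 0 := by
  simp [inversionSum]

lemma inversionSum_cons {V : Type*} [LinearOrder V] (M : Matrix V V (ZMod 2)) (a : V)
    (L : List V) :
    inversionSum M (a :: L) =
      (L.map fun x => if x < a then M a x else 0).sum + inversionSum M L := by
  have h : (L.map fun x => if x < a then M a x else 0).sum
      = ∑ j : Fin L.length, if L.get j < a then M a (L.get j) else 0 := by
    rw [← Fin.sum_univ_fun_getElem]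
    rfl
  rw [h]
  unfold inversionSum
  change (∑ i : Fin (L.length + 1), ∑ j : Fin (L.length + 1), _) = _
  rw [Fin.sum_univ_succ]
  congr 1
  · rw [Fin.sum_univ_succ]
    simp
  · refine Finset.sum_congr rfl fun i _ => ?_
    rw [Fin.sum_univ_succ]
    simp

section Ring

variable {V n : Type*} [LinearOrder V] [Fintype n] [DecidableEq n]
  {α : V → Matrix n n ℂ} {M : Matrix V V (ZMod 2)}

lemma prod_insert (hM : ∀ u v, α u * α v = sgn (M u v) • (α v * α u)) (a : V)
    (L : List V) (hL : L.Pairwise (· ≤ ·)) :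
    α a * (L.map α).prod = sgn ((L.map fun x => if x < a then M a x else 0).sum) •
      ((L.orderedInsert (· ≤ ·) a).map α).prod := by
  induction L with
  | nil => simp [sgn_zero]
  | cons b L ih =>
    rw [List.pairwise_cons] at hL
    by_cases hab : a ≤ b
    · have h0 : ((b :: L).map fun x => if x < a then M a x else 0).sum = 0 := by
        apply List.sum_eq_zero
        intro y hy
        rw [List.mem_map] at hy
        obtain ⟨x, hx, rfl⟩ := hy
        rw [if_neg]
        rw [not_lt]
        rcases List.mem_cons.1 hx with rfl | hx
        · exact hab
        · exact hab.trans (hL.1 x hx)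
      rw [h0, sgn_zero, one_smul, List.orderedInsert_cons, if_pos hab]
      simp
    · rw [List.orderedInsert_cons, if_neg hab]
      simp only [List.map_cons, List.prod_cons, List.sum_cons]
      rw [if_pos (not_le.1 hab), ← mul_assoc, hM a b, smul_mul_assoc, mul_assoc, ih hL.2,
        mul_smul_comm, smul_smul, sgn_add]

lemma prod_sort (hM : ∀ u v, α u * α v = sgn (M u v) • (α v * α u)) (L : List V) :
    (L.map α).prod = sgn (inversionSum M L) •
      ((L.insertionSort (· ≤ ·)).map α).prod := by
  induction L with
  | nil => simp [inversionSum_nil, sgn_zero]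
  | cons a L ih =>
    rw [List.map_cons, List.prod_cons, ih, mul_smul_comm,
      prod_insert hM a _ (List.pairwise_insertionSort _ _), smul_smul, inversionSum_cons, sgn_add,
      List.insertionSort_cons, mul_comm (sgn _)]
    congr 3
    exact ((List.perm_insertionSort (· ≤ ·) L).map _).sum_eq

lemma prod_even (h1 : ∀ v, α v * α v = 1) (N : ℕ) : ∀ (L : List V), L.length ≤ N →
    L.Pairwise (· ≤ ·) → (∀ v, Even (L.count v)) → (L.map α).prod = 1 := by
  induction N using Nat.strong_induction_on with
  | _ N ih =>
    intro L hN hL hc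
    match L with
    | [] => simp
    | [a] =>
      have := hc a
      simp at this
    | a :: b :: t =>
      have hab : a = b := by
        by_contra hne
        have h := hc a
        rw [List.count_cons_self] at h
        have hpos : 0 < (b :: t).count a := by
          rcases Nat.eq_zero_or_pos ((b :: t).count a) with h0 | h0
          · rw [h0] at h
            simp at h
          · exact h0
        have hmem := List.count_pos_iff.1 hpos
        rw [List.pairwise_cons] at hL
        have h2 := hL.2
        rw [List.pairwise_cons] at h2
        have hle : a ≤ b := hL.1 b (by simp)
        rcases List.mem_cons.1 hmem with h3 | h3
        · exact hne h3
        · exact hne (le_antisymm hle (h2.1 a h3))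
      subst hab
      rw [List.map_cons, List.map_cons, List.prod_cons, List.prod_cons, ← mul_assoc, h1, one_mul]
      refine ih (N - 2) ?_ t ?_ ?_ ?_
      · simp at hN; omega
      · simp at hN; omega
      · rw [List.pairwise_cons, List.pairwise_cons] at hL
        exact hL.2.2
      · intro v
        have h := hc v
        rw [List.count_cons, List.count_cons] at h
        split_ifs at h with hv
        · rw [add_assoc] at h
          exact (Nat.even_add.1 h).2 (by decide)
        · simpa using h

lemma prod_even_list (hM : ∀ u v, α u * α v = sgn (M u v) • (α v * α u))
    (h1 : ∀ v, α v * α v = 1) (L : List V) (hc : ∀ v, Even (L.count v)) :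
    (L.map α).prod = sgn (inversionSum M L) • 1 := by
  rw [prod_sort hM, prod_even h1 _ _ le_rfl (List.pairwise_insertionSort _ _)]
  intro v
  rw [(List.perm_insertionSort (· ≤ ·) L).count_eq]
  exact hc v

lemma count_vertexList {E : Type*} (edge : E → Finset V) (le : List E) (v : V) :
    (vertexList edge le).count v = (le.filter fun e => v ∈ edge e).length := by
  unfold vertexList
  induction le with
  | nil => simp
  | cons e le ih =>
    rw [List.map_cons, List.flatten_cons, List.count_append, ih, List.filter_cons]
    by_cases h : v ∈ edge e
    · rw [List.count_eq_one_of_mem (Finset.sort_nodup _ _) (by simpa using h)]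
      simp [h, add_comm]
    · rw [List.count_eq_zero_of_not_mem (by simpa using h)]
      simp [h]

lemma prod_vertexList {E : Type*} (edge : E → Finset V) (le : List E) :
    ((vertexList edge le).map α).prod = (le.map fun e => edgeProd α (edge e)).prod := by
  unfold vertexList
  induction le with
  | nil => simp
  | cons e le ih =>
    rw [List.map_cons, List.flatten_cons, List.map_append, List.prod_append, ih]
    simp [edgeProd]

lemma length_filter_eq {E : Type*} [Fintype E] (le : List E) (hnd : le.Nodup)
    (hmem : ∀ e : E, e ∈ le) (p : E → Prop) [DecidablePred p] :
    (le.filter fun e => p e).length = (Finset.univ.filter p).card := by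
  classical
  rw [← List.toFinset_card_of_nodup (hnd.filter _)]
  congr 1
  ext e
  simp [hmem e]

open scoped Classical in
lemma prod_pm {E : Type*} (β : E → Matrix n n ℂ) (h : ∀ e, β e = 1 ∨ β e = -1)
    (le : List E) :
    (le.map β).prod = sgn ((le.filter fun e => β e = -1).length : ZMod 2) • 1 := by
  induction le with
  | nil => simp [sgn_zero]
  | cons e le ih =>
    rw [List.map_cons, List.prod_cons, ih, List.filter_cons]
    by_cases h' : β e = -1
    · simp [h', sgn_add, sgn_one]
    · have := (h e).resolve_right h'
      simp [h', (h e).resolve_right h', this ▸ h']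

lemma odd_iff [Nonempty n] {E : Type*} [Fintype E] (edge : E → Finset V)
    (hM : ∀ u v, α u * α v = sgn (M u v) • (α v * α u))
    (h1 : ∀ v, α v * α v = 1)
    (hH : ∀ v : V, Even (Finset.univ.filter (fun e : E => v ∈ edge e)).card)
    (le : List E) (hnd : le.Nodup) (hmem : ∀ e : E, e ∈ le)
    (hpm : ∀ e : E, edgeProd α (edge e) = 1 ∨ edgeProd α (edge e) = -1) :
    Odd (Nat.card {e : E // edgeProd α (edge e) = -1}) ↔
      inversionSum M (vertexList edge le) = 1 := by
  classical
  have e1 := prod_even_list hM h1 (vertexList edge le) (by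
    intro v
    rw [count_vertexList, length_filter_eq le hnd hmem (fun e => v ∈ edge e)]
    exact hH v)
  rw [prod_vertexList, prod_pm _ hpm,
    length_filter_eq le hnd hmem (fun e => edgeProd α (edge e) = -1)] at e1
  have e2 : Nat.card {e : E // edgeProd α (edge e) = -1} =
      (Finset.univ.filter (fun e => edgeProd α (edge e) = -1)).card := by
    rw [Nat.card_eq_fintype_card, Fintype.card_subtype]
  rw [e2, ← ZMod.natCast_eq_one_iff_odd]
  set x : ZMod 2 := ((Finset.univ.filter (fun e => edgeProd α (edge e) = -1)).card : ZMod 2)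
  set y := inversionSum M (vertexList edge le)
  have e3 : sgn x = sgn y := by
    obtain ⟨i⟩ := ‹Nonempty n›
    have := congrFun (congrFun e1 i) i
    simpa using this
  rcases zmod2_cases x with h | h <;> rcases zmod2_cases y with h' | h' <;>
    rw [h, h'] at e3 <;> simp [h, h'] <;> rw [sgn_one, sgn_zero] at e3 <;> norm_num at e3

/-- Commuting an element through a product. -/
lemma prod_comm_list (hM : ∀ u v, α u * α v = sgn (M u v) • (α v * α u)) (v : V)
    (L : List V) :
    (L.map α).prod * α v = sgn ((L.map fun u => M u v).sum) • (α v * (L.map α).prod) := by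
  induction L with
  | nil => simp [sgn_zero]
  | cons b L ih =>
    simp only [List.map_cons, List.prod_cons, List.sum_cons]
    rw [mul_assoc, ih, mul_smul_comm, ← mul_assoc, hM b v, smul_mul_assoc, smul_smul, mul_assoc,
      sgn_add, mul_comm]

lemma sum_sort (e : Finset V) (f : V → ZMod 2) :
    ((e.sort (· ≤ ·)).map f).sum = ∑ u ∈ e, f u := by
  rw [← List.sum_toFinset _ (Finset.sort_nodup _ _), Finset.sort_toFinset]

lemma smul_cancel [Nonempty n] {x : ZMod 2} {A B : Matrix n n ℂ} (hB : A * B = 1)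
    (h : A = sgn x • A) : x = 0 := by
  apply sgn_eq_one
  have h2 : A * B = sgn x • (A * B) := by
    rw [← smul_mul_assoc, ← h]
  rw [hB] at h2
  obtain ⟨i⟩ := ‹Nonempty n›
  have := congrFun (congrFun h2 i) i
  simpa using this.symm

lemma sq_prod (h1 : ∀ v, α v * α v = 1) (L : List V)
    (hc : ∀ u ∈ L, ∀ w ∈ L, Commute (α u) (α w)) :
    (L.map α).prod * (L.map α).prod = 1 := by
  induction L with
  | nil => simp
  | cons b L ih =>
    have hcb : Commute (L.map α).prod (α b) := by
      apply Commute.list_prod_left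
      intro x hx
      rw [List.mem_map] at hx
      obtain ⟨u, hu, rfl⟩ := hx
      exact hc u (by simp [hu]) b (by simp)
    rw [List.map_cons, List.prod_cons, mul_assoc, ← mul_assoc _ (α b), hcb.eq, mul_assoc,
      ih (fun u hu w hw => hc u (by simp [hu]) w (by simp [hw])), mul_one, h1]

end Ring

/-! ### Pauli matrices -/

/-- Pauli matrix attached to a symplectic vector. -/
noncomputable def pau (x : ZMod 2 × ZMod 2) : Matrix (Fin 2) (Fin 2) ℂ :=
  if x.1 = 0 then (if x.2 = 0 then 1 else PZ) else (if x.2 = 0 then PX else PY)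

lemma pau_cases (x : ZMod 2 × ZMod 2) :
    pau x = 1 ∨ pau x = PX ∨ pau x = PY ∨ pau x = PZ := by
  unfold pau
  split_ifs <;> simp

lemma exists_pau {P : Matrix (Fin 2) (Fin 2) ℂ} (h : P = 1 ∨ P = PX ∨ P = PY ∨ P = PZ) :
    ∃ x, P = pau x := by
  rcases h with h | h | h | h
  · exact ⟨(0, 0), by simp [pau, h]⟩
  · exact ⟨(1, 0), by simp [pau, h]⟩
  · exact ⟨(1, 1), by simp [pau, h]⟩
  · exact ⟨(0, 1), by simp [pau, h]⟩

lemma pau_zero : pau 0 = 1 := by simp [pau]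

lemma pau_sq (x : ZMod 2 × ZMod 2) : pau x * pau x = 1 := by
  rcases pau_cases x with h | h | h | h <;> rw [h] <;>
    simp [PX, PY, PZ, Matrix.one_fin_two]

/-- Single-qubit symplectic form. -/
def om (x y : ZMod 2 × ZMod 2) : ZMod 2 := x.1 * y.2 + x.2 * y.1

lemma pau_comm (x y : ZMod 2 × ZMod 2) : pau x * pau y = sgn (om x y) • (pau y * pau x) := by
  obtain ⟨a, b⟩ := x
  obtain ⟨c, d⟩ := y
  rcases zmod2_cases a with rfl | rfl <;> rcases zmod2_cases b with rfl | rfl <;>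
  rcases zmod2_cases c with rfl | rfl <;> rcases zmod2_cases d with rfl | rfl <;>
    simp [pau, om, PX, PY, PZ, sgn_zero, sgn_one, zmod2_two]

lemma pau_mul (x y : ZMod 2 × ZMod 2) : ∃ c : ℂ, pau x * pau y = c • pau (x + y) := by
  obtain ⟨a, b⟩ := x
  obtain ⟨c, d⟩ := y
  rcases zmod2_cases a with rfl | rfl <;> rcases zmod2_cases b with rfl | rfl <;>
  rcases zmod2_cases c with rfl | rfl <;> rcases zmod2_cases d with rfl | rfl <;>
    simp only [pau, PX, PY, PZ, zmod2_two, Prod.mk_add_mk, add_zero, zero_add] <;>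
    first
    | (refine ⟨1, ?_⟩; simp [Matrix.one_fin_two]; done)
    | (refine ⟨Complex.I, ?_⟩; simp [Matrix.one_fin_two]; done)
    | (refine ⟨-Complex.I, ?_⟩; simp [Matrix.one_fin_two]; done)

lemma tensor_mul (k : ℕ) (P Q : Fin k → Matrix (Fin 2) (Fin 2) ℂ) :
    pauliTensor k P * pauliTensor k Q = pauliTensor k (fun i => P i * Q i) := by
  ext f g
  simp only [pauliTensor, Matrix.mul_apply, Matrix.of_apply]
  rw [Finset.prod_univ_sum, Fintype.piFinset_univ]
  exact Finset.sum_congr rfl fun h _ => Finset.prod_mul_distrib.symm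

lemma tensor_smul (k : ℕ) (c : Fin k → ℂ) (P : Fin k → Matrix (Fin 2) (Fin 2) ℂ) :
    pauliTensor k (fun i => c i • P i) = (∏ i, c i) • pauliTensor k P := by
  ext f g
  simp [pauliTensor, Finset.prod_mul_distrib]

lemma tensor_one (k : ℕ) : pauliTensor k (fun _ => 1) = 1 := by
  ext f g
  simp only [pauliTensor, Matrix.of_apply, Matrix.one_apply]
  by_cases h : f = g
  · simp [h]
  · rw [if_neg h]
    obtain ⟨i, hi⟩ := Function.ne_iff.1 h
    exact Finset.prod_eq_zero (Finset.mem_univ i) (by simp [hi])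

/-- Pauli string. -/
noncomputable def str (k : ℕ) (x : Fin k → ZMod 2 × ZMod 2) :
    Matrix (Fin k → Fin 2) (Fin k → Fin 2) ℂ := pauliTensor k (fun i => pau (x i))

lemma str_sq (k : ℕ) (x : Fin k → ZMod 2 × ZMod 2) : str k x * str k x = 1 := by
  simp only [str, tensor_mul, pau_sq, tensor_one]

lemma str_comm (k : ℕ) (x y : Fin k → ZMod 2 × ZMod 2) :
    str k x * str k y = sgn (∑ i, om (x i) (y i)) • (str k y * str k x) := by
  simp only [str, tensor_mul]
  rw [sgn_sum, ← tensor_smul]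
  congr 1
  funext i
  exact pau_comm _ _

lemma str_mul (k : ℕ) (x y : Fin k → ZMod 2 × ZMod 2) :
    ∃ c : ℂ, str k x * str k y = c • str k (x + y) := by
  choose c hc using fun i => pau_mul (x i) (y i)
  refine ⟨∏ i, c i, ?_⟩
  simp only [str, tensor_mul, hc, tensor_smul]
  rfl

lemma str_zero (k : ℕ) : str k 0 = 1 := by
  simp only [str, Pi.zero_apply, pau_zero, tensor_one]

lemma str_prod {V : Type*} (k : ℕ) (x : V → Fin k → ZMod 2 × ZMod 2) (L : List V) :
    ∃ c : ℂ, (L.map fun v => str k (x v)).prod = c • str k ((L.map x).sum) := by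
  induction L with
  | nil => exact ⟨1, by simp [str_zero]⟩
  | cons a L ih =>
    obtain ⟨c, hc⟩ := ih
    obtain ⟨d, hd⟩ := str_mul k (x a) ((L.map x).sum)
    refine ⟨c * d, ?_⟩
    rw [List.map_cons, List.prod_cons, hc, mul_smul_comm, hd, smul_smul, List.map_cons,
      List.sum_cons]

/-! ### Symplectic factorization -/

lemma factor {V : Type*} [Fintype V] [DecidableEq V] (r : ℕ) : ∀ (M : Matrix V V (ZMod 2)),
    M.rank ≤ r → M.IsSymm → (∀ v, M v v = 0) →
    ∃ (k : ℕ) (f g : Fin k → V → ZMod 2), 2 * k ≤ M.rank ∧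
      (∀ u v, M u v = ∑ i, (f i u * g i v + g i u * f i v)) ∧
      (∀ i, f i ∈ LinearMap.range M.mulVecLin) ∧ (∀ i, g i ∈ LinearMap.range M.mulVecLin) := by
  induction r using Nat.strong_induction_on with
  | _ r ih =>
    intro M hr hs hd
    by_cases h0 : M = 0
    · exact ⟨0, Fin.elim0, Fin.elim0, by simp, by simp [h0], fun i => i.elim0, fun i => i.elim0⟩
    · obtain ⟨a, b, hab⟩ : ∃ a b, M a b ≠ 0 := by
        by_contra! h
        exact h0 (by ext a b; simp [h])
      have hab1 : M a b = 1 := (zmod2_cases _).resolve_left hab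
      have hba1 : M b a = 1 := by rw [← hab1]; exact hs.apply a b
      have hsy : ∀ u v, M u v = M v u := fun u v => hs.apply v u
      let M' : Matrix V V (ZMod 2) :=
        Matrix.of fun u v => M u v + (M u a * M v b + M u b * M v a)
      have hM' : ∀ u v, M' u v = M u v + (M u a * M v b + M u b * M v a) := fun _ _ => rfl
      have hfa : (fun u => M u a) ∈ LinearMap.range M.mulVecLin :=
        ⟨Pi.single a 1, by ext u; simp⟩
      have hfb : (fun u => M u b) ∈ LinearMap.range M.mulVecLin :=
        ⟨Pi.single b 1, by ext u; simp⟩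
      have hle : LinearMap.range M'.mulVecLin ≤ LinearMap.range M.mulVecLin := by
        rintro _ ⟨c, rfl⟩
        have : M'.mulVecLin c = M.mulVecLin c + ((∑ v, M v b * c v) • (fun u => M u a)
            + (∑ v, M v a * c v) • (fun u => M u b)) := by
          ext u
          simp only [Matrix.mulVecLin_apply, Matrix.mulVec, dotProduct, hM', Pi.add_apply,
            Pi.smul_apply, smul_eq_mul, Finset.sum_mul]
          rw [← Finset.sum_add_distrib, ← Finset.sum_add_distrib]
          exact Finset.sum_congr rfl fun v _ => by ring
        rw [this]
        exact add_mem ⟨c, rfl⟩ (add_mem (Submodule.smul_mem _ _ hfa) (Submodule.smul_mem _ _ hfb))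
      have hMa : ∀ v, M' a v = 0 := by
        intro v
        rw [hM', hd a, hab1, hsy v a, zero_mul, zero_add, one_mul, zmod2_self]
      have hMb : ∀ v, M' b v = 0 := by
        intro v
        rw [hM', hd b, hba1, hsy v b, zero_mul, add_zero, one_mul, zmod2_self]
      let pa : (V → ZMod 2) →ₗ[ZMod 2] ZMod 2 := LinearMap.proj a
      let pb : (V → ZMod 2) →ₗ[ZMod 2] ZMod 2 := LinearMap.proj b
      let R := LinearMap.range M.mulVecLin
      let W1 := R ⊓ LinearMap.ker pb
      let W2 := W1 ⊓ LinearMap.ker pa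
      have l1 : W1 < R := by
        refine lt_of_le_of_ne inf_le_left fun h => ?_
        have : (fun u => M u a) ∈ W1 := by rw [h]; exact hfa
        have h3 : M b a = 0 := this.2
        rw [hba1] at h3
        exact one_ne_zero h3
      have l2 : W2 < W1 := by
        refine lt_of_le_of_ne inf_le_left fun h => ?_
        have : (fun u => M u b) ∈ W2 := by
          rw [h]
          exact ⟨hfb, hd b⟩
        have h3 : M a b = 0 := this.2
        exact hab h3
      have l3 : LinearMap.range M'.mulVecLin ≤ W2 := by
        intro w hw
        refine ⟨⟨hle hw, ?_⟩, ?_⟩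
        · obtain ⟨c, rfl⟩ := hw
          change ∑ v, M' b v * c v = 0
          simp [hMb]
        · obtain ⟨c, rfl⟩ := hw
          change ∑ v, M' a v * c v = 0
          simp [hMa]
      have m1 := Submodule.finrank_lt_finrank_of_lt l1
      have m2 := Submodule.finrank_lt_finrank_of_lt l2
      have m3 := Submodule.finrank_mono l3
      have m4 : M'.rank + 2 ≤ M.rank := by
        change Module.finrank _ (LinearMap.range M'.mulVecLin) + 2 ≤ Module.finrank _ R
        omega
      obtain ⟨k, f, g, hk, hfg, hf, hg⟩ := ih M'.rank (by omega) M' le_rfl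
        (by
          ext u v
          rw [Matrix.transpose_apply, hM', hM', hsy v u]
          ring)
        (by
          intro v
          rw [hM', hd v, zero_add, mul_comm (M v b), zmod2_self])
      refine ⟨k + 1, Fin.cons (fun u => M u a) f, Fin.cons (fun u => M u b) g, by omega, ?_, ?_, ?_⟩
      · intro u v
        rw [Fin.sum_univ_succ]
        simp only [Fin.cons_zero, Fin.cons_succ]
        rw [← hfg u v, hM']
        have := zmod2_self (M u a * M v b + M u b * M v a)
        rw [add_comm (M u v), ← add_assoc, this, zero_add]
      · intro i
        refine Fin.cases ?_ (fun j => ?_) i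
        · exact hfa
        · exact hle (hf j)
      · intro i
        refine Fin.cases ?_ (fun j => ?_) i
        · exact hfb
        · exact hle (hg j)

section Main

variable {V E : Type*} [Fintype V] [LinearOrder V] [Fintype E]

/-- From an assignment to a Gram matrix. -/
lemma assignment_to_gram (edge : E → Finset V) (hH : ProperEulerian edge)
    (le : List E) (hnd : le.Nodup) (hmem : ∀ e : E, e ∈ le) (k : ℕ)
    (α : V → Matrix (Fin k → Fin 2) (Fin k → Fin 2) ℂ) (hα : IsPauliMagicAssignment k edge α) :
    ∃ M : Matrix V V (ZMod 2), MagicGram edge le M ∧ M.rank ≤ 2 * k := by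
  obtain ⟨hobs, hcomm, hpm, hodd⟩ := hα
  have hx : ∀ v, ∃ (ε : ℂ) (x : Fin k → ZMod 2 × ZMod 2), (ε = 1 ∨ ε = -1) ∧
      α v = ε • str k x := by
    intro v
    obtain ⟨ε, P, hε, hP, hA⟩ := hobs v
    choose x hx using fun i => exists_pau (hP i)
    refine ⟨ε, x, hε, ?_⟩
    rw [hA, str]
    congr 2
    funext i
    exact hx i
  choose ε x hε hαx using hx
  let M : Matrix V V (ZMod 2) := Matrix.of fun u v => ∑ i, om (x u i) (x v i)
  have hM : ∀ u v, α u * α v = sgn (M u v) • (α v * α u) := by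
    intro u v
    rw [hαx u, hαx v, smul_mul_smul_comm, str_comm, smul_mul_smul_comm, smul_smul, smul_smul,
      mul_comm (sgn _), mul_comm (ε v)]
    rfl
  have h1 : ∀ v, α v * α v = 1 := by
    intro v
    rw [hαx v, smul_mul_smul_comm, str_sq]
    rcases hε v with h | h <;> simp [h]
  refine ⟨M, ⟨⟨?_, ?_, ?_, ?_⟩, (odd_iff edge hM h1 hH.1 le hnd hmem hpm).1 hodd⟩, ?_⟩
  · ext u v
    simp only [M, Matrix.transpose_apply, Matrix.of_apply, om]
    exact Finset.sum_congr rfl fun i _ => by ring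
  · intro v
    simp only [M, Matrix.of_apply, om]
    exact Finset.sum_eq_zero fun i _ => by rw [mul_comm (x v i).2, zmod2_self]
  · intro e u hu v hv
    refine smul_cancel (A := α u * α v) (B := α v * α u) ?_ ?_
    · rw [mul_assoc, ← mul_assoc (α v), h1, one_mul, h1]
    · conv_lhs => rw [hM u v]
      rw [(hcomm e u hu v hv).eq]
  · intro e v
    rw [← sum_sort (edge e) (fun u => M u v)]
    have h := prod_comm_list hM v ((edge e).sort (· ≤ ·))
    change edgeProd α (edge e) * α v = _ • (α v * edgeProd α (edge e)) at h
    rcases hpm e with h' | h'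
    · rw [h', one_mul, mul_one] at h
      exact smul_cancel (h1 v) h
    · rw [h', neg_one_mul, mul_neg_one] at h
      exact smul_cancel (A := - α v) (B := - α v) (by rw [neg_mul_neg, h1]) h
  · let A : Matrix V (Fin k ⊕ Fin k) (ZMod 2) :=
      Matrix.of fun u j => Sum.elim (fun i => (x u i).1) (fun i => (x u i).2) j
    let B : Matrix (Fin k ⊕ Fin k) V (ZMod 2) :=
      Matrix.of fun j u => Sum.elim (fun i => (x u i).2) (fun i => (x u i).1) j
    have hAB : M = A * B := by
      ext u v
      simp [M, A, B, Matrix.mul_apply, om, Finset.sum_add_distrib]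
    rw [hAB]
    refine (Matrix.rank_mul_le_left A B).trans ((Matrix.rank_le_card_width A).trans ?_)
    simp [two_mul]

/-- From a Gram matrix to an assignment. -/
lemma gram_to_assignment (edge : E → Finset V) (hH : ProperEulerian edge)
    (le : List E) (hnd : le.Nodup) (hmem : ∀ e : E, e ∈ le)
    (M : Matrix V V (ZMod 2)) (hM : MagicGram edge le M) :
    ∃ k : ℕ, 2 * k ≤ M.rank ∧ 1 ≤ k ∧
      ∃ α : V → Matrix (Fin k → Fin 2) (Fin k → Fin 2) ℂ, IsPauliMagicAssignment k edge α := by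
  obtain ⟨⟨hs, hd, he, hsum⟩, hinv⟩ := hM
  obtain ⟨k, f, g, hk, hfg, hf, hg⟩ := factor M.rank M le_rfl hs hd
  have hk1 : 1 ≤ k := by
    rcases Nat.eq_zero_or_pos k with rfl | h
    · have : M = 0 := by
        ext u v
        rw [hfg]
        simp
      rw [this] at hinv
      simp [inversionSum] at hinv
    · exact h
  have hrange : ∀ w ∈ LinearMap.range M.mulVecLin, ∀ e, ∑ u ∈ edge e, w u = 0 := by
    rintro _ ⟨c, rfl⟩ e
    simp only [Matrix.mulVecLin_apply, Matrix.mulVec, dotProduct]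
    rw [Finset.sum_comm]
    refine Finset.sum_eq_zero fun v _ => ?_
    rw [← Finset.sum_mul, hsum, zero_mul]
  let x : V → Fin k → ZMod 2 × ZMod 2 := fun v i => (f i v, g i v)
  let α : V → Matrix (Fin k → Fin 2) (Fin k → Fin 2) ℂ := fun v => str k (x v)
  have hMα : ∀ u v, α u * α v = sgn (M u v) • (α v * α u) := by
    intro u v
    rw [hfg]
    exact str_comm k (x u) (x v)
  have h1 : ∀ v, α v * α v = 1 := fun v => str_sq k (x v)
  have hcomm : ∀ e : E, ∀ u ∈ edge e, ∀ w ∈ edge e, Commute (α u) (α w) := by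
    intro e u hu w hw
    have := hMα u w
    rw [he e u hu w hw, sgn_zero, one_smul] at this
    exact this
  have hpm : ∀ e : E, edgeProd α (edge e) = 1 ∨ edgeProd α (edge e) = -1 := by
    intro e
    obtain ⟨c, hc⟩ := str_prod k x ((edge e).sort (· ≤ ·))
    have hz : (((edge e).sort (· ≤ ·)).map x).sum = 0 := by
      have : (((edge e).sort (· ≤ ·)).map x).sum = ∑ u ∈ edge e, x u := by
        rw [← List.sum_toFinset _ (Finset.sort_nodup _ _), Finset.sort_toFinset]
      rw [this]
      funext i
      rw [Finset.sum_apply]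
      refine Prod.ext ?_ ?_
      · rw [Prod.fst_sum]
        exact hrange _ (hf i) e
      · rw [Prod.snd_sum]
        exact hrange _ (hg i) e
    rw [hz, str_zero] at hc
    have hsq := sq_prod h1 ((edge e).sort (· ≤ ·)) (by
      intro u hu w hw
      exact hcomm e u (by simpa using hu) w (by simpa using hw))
    change edgeProd α (edge e) = c • 1 at hc
    change edgeProd α (edge e) * edgeProd α (edge e) = 1 at hsq
    rw [hc] at hsq ⊢
    have h3 := congrFun (congrFun hsq 0) 0
    have h4 : c * c = 1 := by simpa using h3
    rcases mul_self_eq_one_iff.1 h4 with h | h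
    · left; simp [h]
    · right; simp [h]
  refine ⟨k, hk, hk1, α, ?_, hcomm, hpm, (odd_iff edge hMα h1 hH.1 le hnd hmem hpm).2 hinv⟩
  intro v
  exact ⟨1, fun i => pau (x v i), Or.inl rfl, fun i => pau_cases _, by simp [α, str]⟩

end Main

end PauliAux

/-- For a proper Eulerian hypergraph whose valid Gram space contains a magic
Gram matrix, the minimum `k ≥ 1` admitting a `k`-qubit Pauli-based magic assignment is half of
the minimum rank over `ZMod 2` of the magic Gram matrices in the valid Gram space. -/
theorem stmt4 {V E : Type*} [Fintype V] [LinearOrder V] [Fintype E]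
    (edge : E → Finset V) (hH : ProperEulerian edge)
    (le : List E) (hnd : le.Nodup) (hmem : ∀ e : E, e ∈ le)
    (hmagic : ∃ M : Matrix V V (ZMod 2), MagicGram edge le M)
    (rmin : ℕ)
    (hr : IsLeast {r : ℕ | ∃ M : Matrix V V (ZMod 2), MagicGram edge le M ∧ M.rank = r} rmin) :
    ∃ kmin : ℕ, IsLeast {k : ℕ | 1 ≤ k ∧
        ∃ α : V → Matrix (Fin k → Fin 2) (Fin k → Fin 2) ℂ,
          IsPauliMagicAssignment k edge α} kmin ∧
      2 * kmin = rmin := by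
  obtain ⟨⟨M, hM, hMr⟩, hmin⟩ := hr
  obtain ⟨k, hk, hk1, α, hα⟩ := PauliAux.gram_to_assignment edge hH le hnd hmem M hM
  have hlow : ∀ k', (∃ α : V → Matrix (Fin k' → Fin 2) (Fin k' → Fin 2) ℂ,
      IsPauliMagicAssignment k' edge α) → rmin ≤ 2 * k' := by
    rintro k' ⟨β, hβ⟩
    obtain ⟨N, hN, hNr⟩ := PauliAux.assignment_to_gram edge hH le hnd hmem k' β hβ
    exact (hmin ⟨N, hN, rfl⟩).trans hNr
  have h1 := hlow k ⟨α, hα⟩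
  refine ⟨k, ⟨⟨hk1, α, hα⟩, ?_⟩, by omega⟩
  rintro k' ⟨_, hk'⟩
  have := hlow k' hk'
  omega
end
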